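/- Let (P, W, c) be a witness Gabriel drawing of a complete k-partite graph with P ∪ W in general position. Then there do not exist points b₁ ≠ b₂ in P with c(b₁) = c(b₂), points m₁ ≠ m₂ in P of a common color different from c(b₁), and points g₁ ≠ g₂ in P of a common color different from c(b₁) (the colors of the m's and the g's may coincide, but {m₁,m₂} ∩ {g₁,g₂} = ∅), such that m₁ and m₂ lie strictly on one side of the line through b₁ and b₂ while g₁ and g₂ lie strictly on the other side (i.e., det(b₂ − b₁, mᵢ − b₁) > 0 and det(b₂ − b₁, gᵢ − b₁) < 0 for i = 1, 2). -/

import Mathlib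

open scoped RealInnerProductSpace

noncomputable section

/-- The Euclidean plane. -/
abbrev Pt := EuclideanSpace ℝ (Fin 2)

/-- The closed disk with diameter `ab`. -/
def diskD (a b : Pt) : Set Pt := Metric.closedBall (midpoint ℝ a b) (dist a b / 2)

/-- `a` and `b` are adjacent in the witness Gabriel graph with witness set `W`. -/
def gabrielEdge (W : Set Pt) (a b : Pt) : Prop := (diskD a b \ {a, b}) ∩ W = ∅

/-- General position: no three points collinear, no four points concyclic. -/
def GenPos (S : Set Pt) : Prop :=
  (∀ a ∈ S, ∀ b ∈ S, ∀ c ∈ S, a ≠ b → a ≠ c → b ≠ c → ¬ Collinear ℝ ({a, b, c} : Set Pt)) ∧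
  (∀ a ∈ S, ∀ b ∈ S, ∀ c ∈ S, ∀ d ∈ S, a ≠ b → a ≠ c → a ≠ d → b ≠ c → b ≠ d → c ≠ d →
    ¬ EuclideanGeometry.Cospherical ({a, b, c, d} : Set Pt))

/-- Planar determinant `u₁v₂ − u₂v₁`. -/
def det2 (u v : Pt) : ℝ := u 0 * v 1 - u 1 * v 0

/-- Counterclockwise convex position. -/
def CCWConvexPos {m : ℕ} (q : Fin m → Pt) : Prop :=
  ∀ i j k : Fin m, i < j → j < k → 0 < det2 (q j - q i) (q k - q i)

/-- Cyclic successor in `Fin m`. -/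
def cyclicSucc {m : ℕ} (hm : 0 < m) (i : Fin m) : Fin m :=
  ⟨((i : ℕ) + 1) % m, Nat.mod_lt _ hm⟩

/-!
By Thales' theorem, `w ∈ diskD a b` iff `⟪a - w, b - w⟫ ≤ 0`. Suppose a witness `w` blocks the pair
`b, d` but none of the four pairs joining `b, d` to `g, h`, and that `w`, `g`, `h` lie on the same
side of the line `bd`. A vector at non-obtuse angles to both arms of a non-acute planar angle lies
inside that angle, so `g` and `h` lie in the triangle `wbd`, which is contained in `diskD b d`.

Suppose another witness `v` blocks `g, h` but none of those four pairs. If `v ≠ b, d`, then `b` and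
`d` lie strictly inside the angle `gvh` and the angle `bvd` is acute, so `v ∉ diskD b d`. The line
`vg` has `b` and `d` strictly on one side and passes through the point `g` of the triangle `wbd`, so
`w` does not lie on that side; likewise for `vh`. Hence `w` lies in the angle opposite to `gvh`,
that is, `v` lies in the triangle `wgh` and therefore in `diskD b d`, a contradiction. If `v = b`,
the angle `gbh` is contained in the angle `wbd`, which is acute; similarly for `v = d`.

So every such pair `g, h` on the side of `w` is adjacent, and the witness blocking `b₁, b₂` lies on
one of the two sides.
-/

section Convexity

theorem map_le_of_mem_convexHull_insert {E : Type*} [AddCommGroup E] [Module ℝ E]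
    (f : E →ₗ[ℝ] ℝ) {s : Set E} {w x : E} (hx : x ∈ convexHull ℝ (insert w s))
    (hs : ∀ z ∈ s, f x < f z) : f w ≤ f x := by
  obtain ⟨z, rfl | hz, hzx⟩ :=
    (f.concaveOn convex_univ).exists_le_of_mem_convexHull (Set.subset_univ _) hx
  · exact hzx
  · exact absurd hzx (hs z hz).not_ge

theorem mem_convexHull_triple_of_smul_add_smul_add_smul_eq_zero {E : Type*} [AddCommGroup E]
    [Module ℝ E] {p x y z : E} {α β γ : ℝ} (hα : 0 ≤ α) (hβ : 0 ≤ β) (hγ : 0 ≤ γ)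
    (hsum : 0 < α + β + γ) (h : α • (x - p) + β • (y - p) + γ • (z - p) = 0) :
    p ∈ convexHull ℝ {x, y, z} := by
  have hp : p = (α + β + γ)⁻¹ • (α • x + β • y + γ • z) := by
    rw [eq_inv_smul_iff₀ hsum.ne', ← sub_eq_zero, ← neg_eq_zero, ← h]
    module
  have hmem : ∀ q ∈ ({x, y, z} : Set E), q ∈ convexHull ℝ {x, y, z} :=
    fun q hq ↦ subset_convexHull ℝ _ hq
  have := (convex_convexHull ℝ {x, y, z}).centerMass_mem (t := Finset.univ)
    (w := ![α, β, γ]) (z := ![x, y, z])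
    (by simp [Fin.forall_fin_succ, hα, hβ, hγ]) (by simpa [Fin.sum_univ_three] using hsum)
    (by simp [Fin.forall_fin_succ, hmem])
  simpa [Finset.centerMass, Fin.sum_univ_three, ← hp] using this

end Convexity

section InnerProductSpace

variable {E : Type*} [NormedAddCommGroup E] [InnerProductSpace ℝ E]

theorem mem_closedBall_midpoint_iff_inner_nonpos {a b w : E} :
    w ∈ Metric.closedBall (midpoint ℝ a b) (dist a b / 2) ↔ ⟪a - w, b - w⟫ ≤ 0 := by
  have hmid : dist w (midpoint ℝ a b) = ‖(a - w) + (b - w)‖ / 2 := by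
    have : midpoint ℝ a b - w = (2⁻¹ : ℝ) • ((a - w) + (b - w)) := by
      rw [midpoint_eq_smul_add, invOf_eq_inv]
      module
    rw [dist_comm, dist_eq_norm, this, norm_smul, Real.norm_of_nonneg (by positivity)]
    ring
  rw [Metric.mem_closedBall, hmid, dist_eq_norm, ← sub_sub_sub_cancel_right a b w,
    div_le_div_iff_of_pos_right two_pos, mul_self_le_mul_self_iff (norm_nonneg _) (norm_nonneg _),
    norm_add_mul_self_real (a - w), norm_sub_mul_self_real (a - w)]
  constructor <;> intro h <;> linarith

theorem inner_sub_pos_of_inner_sub_nonpos {b d w : E} (hw : ⟪b - w, d - w⟫ ≤ 0) (hwb : w ≠ b) :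
    0 < ⟪w - b, d - b⟫ := by
  have hself : 0 < ⟪w - b, w - b⟫ := real_inner_self_pos.2 (sub_ne_zero.2 hwb)
  have hsplit : ⟪w - b, d - b⟫ = ⟪w - b, w - b⟫ - ⟪b - w, d - w⟫ := by
    rw [← neg_sub w b, inner_neg_left, sub_neg_eq_add, ← inner_add_right]
    congr 1
    abel
  linarith

theorem inner_sub_pos_of_mem_convexHull_insert {s : Set E} {p x y : E}
    (hs : ∀ z ∈ s, 0 < ⟪z - p, y⟫) (hx : x ∈ convexHull ℝ (insert p s)) (hxp : x ≠ p) :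
    0 < ⟪x - p, y⟫ := by
  rcases s.eq_empty_or_nonempty with rfl | hne
  · simp [hxp] at hx
  rw [convexHull_insert hne, convexJoin_singleton_left, Set.mem_iUnion₂] at hx
  obtain ⟨z, hz, hxz⟩ := hx
  rw [segment_eq_image_lineMap] at hxz
  obtain ⟨t, ⟨ht, -⟩, rfl⟩ := hxz
  have ht0 : t ≠ 0 := by
    rintro rfl
    simp at hxp
  have hzpos : ⟪y, p⟫ < ⟪y, z⟫ :=
    convexHull_min (fun q hq ↦ by simpa [inner_sub_left, real_inner_comm] using hs q hq)
      (convex_halfSpace_gt (innerₗ E y).isLinear ⟪y, p⟫) hz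
  rw [AffineMap.lineMap_apply_module', add_sub_cancel_right, real_inner_smul_left, inner_sub_left,
    real_inner_comm, real_inner_comm y p]
  exact mul_pos (ht.lt_of_ne' ht0) (sub_pos.2 hzpos)

theorem inner_sub_sub_pos_of_mem_convexHull_insert {s : Set E} {p x y : E}
    (hs : ∀ z ∈ s, ∀ z' ∈ s, 0 < ⟪z - p, z' - p⟫) (hx : x ∈ convexHull ℝ (insert p s))
    (hy : y ∈ convexHull ℝ (insert p s)) (hxp : x ≠ p) (hyp : y ≠ p) :
    0 < ⟪x - p, y - p⟫ := by
  refine inner_sub_pos_of_mem_convexHull_insert (fun z hz ↦ ?_) hx hxp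
  rw [real_inner_comm]
  exact inner_sub_pos_of_mem_convexHull_insert (fun z' hz' ↦ hs z' hz' z hz) hy hyp

end InnerProductSpace

section Determinant

theorem inner_eq_coord (u v : Pt) : ⟪u, v⟫ = u 0 * v 0 + u 1 * v 1 := by
  simp [PiLp.inner_apply, Fin.sum_univ_two, mul_comm]

theorem isLinearMap_det2 (u : Pt) : IsLinearMap ℝ (det2 u) where
  map_add v w := by simp only [det2, PiLp.add_apply]; ring
  map_smul r v := by simp only [det2, PiLp.smul_apply, smul_eq_mul]; ring

theorem det2_swap (u v : Pt) : det2 v u = -det2 u v := by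
  simp only [det2]; ring

theorem det2_swap_mul_det2_swap (u v x y : Pt) : det2 v u * det2 y x = det2 u v * det2 x y := by
  rw [det2_swap u v, det2_swap x y, neg_mul_neg]

theorem det2_sub_sub_rotate (x y z : Pt) : det2 (y - x) (z - x) = det2 (z - y) (x - y) := by
  simp only [det2, PiLp.sub_apply]; ring

theorem det2_mul_det2 (u v x y : Pt) :
    det2 u v * det2 x y = ⟪u, x⟫ * ⟪v, y⟫ - ⟪u, y⟫ * ⟪v, x⟫ := by
  simp only [det2, inner_eq_coord]; ring

theorem det2_mul_inner (u v x y : Pt) :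
    det2 u v * ⟪x, y⟫ = det2 x v * ⟪u, y⟫ + det2 u x * ⟪v, y⟫ := by
  simp only [det2, inner_eq_coord]; ring

theorem det2_smul_sub_add_det2_smul_sub_add_det2_smul_sub (p x y z : Pt) :
    det2 (y - p) (z - p) • (x - p) + det2 (z - p) (x - p) • (y - p) +
      det2 (x - p) (y - p) • (z - p) = 0 := by
  ext i
  fin_cases i <;> simp [det2] <;> ring

theorem inner_self_smul_eq_of_det2_eq_zero {u v : Pt} (h : det2 u v = 0) :
    ⟪u, u⟫ • v = ⟪u, v⟫ • u := by
  simp only [det2] at h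
  ext i
  simp only [PiLp.smul_apply, smul_eq_mul, inner_eq_coord]
  fin_cases i <;> simp only [Fin.zero_eta, Fin.mk_one]
  · linear_combination -u 1 * h
  · linear_combination u 0 * h

theorem collinear_of_det2_eq_zero {a b c : Pt} (h : det2 (b - a) (c - a) = 0) :
    Collinear ℝ ({a, b, c} : Set Pt) := by
  rcases eq_or_ne a b with rfl | hab
  · simpa using collinear_pair ℝ a c
  have hnorm : ⟪b - a, b - a⟫ ≠ 0 := inner_self_ne_zero.2 (sub_ne_zero.2 hab.symm)
  have hc : c = AffineMap.lineMap a b (⟪b - a, c - a⟫ / ⟪b - a, b - a⟫) := by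
    rw [AffineMap.lineMap_apply_module', ← sub_eq_iff_eq_add, div_eq_inv_mul, mul_smul,
      eq_inv_smul_iff₀ hnorm]
    exact inner_self_smul_eq_of_det2_eq_zero h
  rw [Set.pair_comm, Set.insert_comm, hc]
  exact collinear_insert_of_mem_affineSpan_pair (AffineMap.lineMap_mem_affineSpan_pair _ a b)

end Determinant

section PlanarAngle

variable {u v x y : Pt}

/-- By Cramer's rule, `det2 u v * det2 x v` has the sign of the `u`-coordinate of `x` in the basis
`u, v`, so `x` lies in the angle spanned by `u` and `v`. -/
theorem det2_mul_det2_nonneg_of_inner_nonneg (huv : ⟪u, v⟫ ≤ 0) (hux : 0 ≤ ⟪u, x⟫)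
    (hvx : 0 ≤ ⟪v, x⟫) : 0 ≤ det2 u v * det2 x v := by
  rw [det2_mul_det2]
  linarith [mul_nonneg hux (real_inner_self_nonneg (x := v)),
    mul_nonpos_of_nonpos_of_nonneg huv hvx]

theorem det2_mul_det2_pos_of_inner_pos (huv : ⟪u, v⟫ ≤ 0) (hux : 0 < ⟪u, x⟫) (hvx : 0 < ⟪v, x⟫) :
    0 < det2 u v * det2 x v := by
  have hv : v ≠ 0 := by
    rintro rfl
    simp at hvx
  rw [det2_mul_det2]
  linarith [mul_pos hux (real_inner_self_pos.2 hv), mul_nonpos_of_nonpos_of_nonneg huv hvx.le]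

theorem inner_pos_of_inner_nonpos (huv : ⟪u, v⟫ ≤ 0) (hux : 0 < ⟪u, x⟫) (hvx : 0 < ⟪v, x⟫)
    (huy : 0 < ⟪u, y⟫) (hvy : 0 < ⟪v, y⟫) : 0 < ⟪x, y⟫ := by
  have hxv : 0 < det2 u v * det2 x v := det2_mul_det2_pos_of_inner_pos huv hux hvx
  have hux' : 0 < det2 u v * det2 u x := by
    rw [← det2_swap_mul_det2_swap]
    exact det2_mul_det2_pos_of_inner_pos (by rwa [real_inner_comm]) hvx hux
  have hcramer : det2 u v * det2 u v * ⟪x, y⟫ =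
      det2 u v * det2 x v * ⟪u, y⟫ + det2 u v * det2 u x * ⟪v, y⟫ := by
    rw [mul_assoc, det2_mul_inner]
    ring
  refine pos_of_mul_pos_right (a := det2 u v * det2 u v) ?_ (mul_self_nonneg _)
  rw [hcramer]
  positivity

end PlanarAngle

section Triangle

variable {p x y z : Pt}

/-- The factor `δ` makes the criterion independent of the orientation of the triangle. -/
theorem mem_convexHull_triple_of_det2 {δ : ℝ} (hx : 0 < δ * det2 (y - p) (z - p))
    (hy : 0 ≤ δ * det2 (z - p) (x - p)) (hz : 0 ≤ δ * det2 (x - p) (y - p)) :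
    p ∈ convexHull ℝ {x, y, z} := by
  refine mem_convexHull_triple_of_smul_add_smul_add_smul_eq_zero hx.le hy hz (by positivity) ?_
  simp_rw [mul_smul, ← smul_add]
  rw [det2_smul_sub_add_det2_smul_sub_add_det2_smul_sub, smul_zero]

theorem mul_det2_nonpos_of_mem_convexHull {δ : ℝ} {g : Pt} (hg : g ∈ convexHull ℝ {x, y, z})
    (hy : 0 < δ * det2 (g - p) (y - p)) (hz : 0 < δ * det2 (g - p) (z - p)) :
    δ * det2 (g - p) (x - p) ≤ 0 := by
  let f : Pt →ₗ[ℝ] ℝ := δ • (isLinearMap_det2 (g - p)).mk'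
  have hf (q : Pt) : δ * det2 (g - p) (q - p) = f q - f g := by
    simp only [f, LinearMap.smul_apply, IsLinearMap.mk'_apply, smul_eq_mul, det2, PiLp.sub_apply]
    ring
  rw [hf, sub_pos] at hy hz
  rw [hf, sub_nonpos]
  refine map_le_of_mem_convexHull_insert f hg ?_
  rintro q (rfl | rfl)
  exacts [hy, hz]

theorem mem_convexHull_of_inner_nonneg {b d g w : Pt} (hw : ⟪b - w, d - w⟫ ≤ 0)
    (hside : 0 < det2 (d - b) (w - b) * det2 (d - b) (g - b)) (hb : 0 ≤ ⟪b - w, g - w⟫)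
    (hd : 0 ≤ ⟪d - w, g - w⟫) : g ∈ convexHull ℝ {w, b, d} := by
  refine mem_convexHull_triple_of_det2 (δ := det2 (b - w) (d - w)) ?_ ?_ ?_
  · rwa [det2_sub_sub_rotate w b d, det2_sub_sub_rotate g b d]
  · rw [← det2_sub_sub_rotate w g d]
    exact det2_mul_det2_nonneg_of_inner_nonneg hw hb hd
  · rw [det2_sub_sub_rotate g w b, ← det2_swap_mul_det2_swap]
    exact det2_mul_det2_nonneg_of_inner_nonneg (by rwa [real_inner_comm]) hd hb

end Triangle

section Disk

variable {a b d g h v w : Pt}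

theorem mem_diskD : w ∈ diskD a b ↔ ⟪a - w, b - w⟫ ≤ 0 :=
  mem_closedBall_midpoint_iff_inner_nonpos

theorem left_mem_diskD (a b : Pt) : a ∈ diskD a b := by simp [mem_diskD]

theorem diskD_comm (a b : Pt) : diskD a b = diskD b a := by
  ext w
  rw [mem_diskD, mem_diskD, real_inner_comm]

theorem right_mem_diskD (a b : Pt) : b ∈ diskD a b := by simp [mem_diskD]

theorem convexHull_subset_diskD (hw : w ∈ diskD a b) : convexHull ℝ {w, a, b} ⊆ diskD a b := by
  refine convexHull_min ?_ (convex_closedBall _ _)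
  rintro q (rfl | rfl | rfl)
  exacts [hw, left_mem_diskD _ _, right_mem_diskD _ _]

theorem notMem_diskD_of_mem_convexHull (hw : w ∈ diskD b d) (hwb : w ≠ b)
    (hg : g ∈ convexHull ℝ {b, w, d}) (hh : h ∈ convexHull ℝ {b, w, d}) (hgb : g ≠ b)
    (hhb : h ≠ b) : b ∉ diskD g h := by
  have hwd : 0 < ⟪w - b, d - b⟫ := inner_sub_pos_of_inner_sub_nonpos (mem_diskD.1 hw) hwb
  have hdb : d - b ≠ 0 := fun h0 ↦ by simp [h0] at hwd
  rw [mem_diskD, not_le]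
  refine inner_sub_sub_pos_of_mem_convexHull_insert ?_ hg hh hgb hhb
  rintro z (rfl | rfl) z' (rfl | rfl)
  · exact real_inner_self_pos.2 (sub_ne_zero.2 hwb)
  · exact hwd
  · rwa [real_inner_comm]
  · exact real_inner_self_pos.2 hdb

theorem notMem_diskD_of_inner_pos (hw : w ∈ diskD b d) (hg : g ∈ convexHull ℝ {w, b, d})
    (hh : h ∈ convexHull ℝ {w, b, d}) (hgb : 0 < ⟪g - v, b - v⟫) (hhb : 0 < ⟪h - v, b - v⟫)
    (hgd : 0 < ⟪g - v, d - v⟫) (hhd : 0 < ⟪h - v, d - v⟫) : v ∉ diskD g h := by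
  intro hv
  rw [mem_diskD] at hv
  have hv' : ⟪h - v, g - v⟫ ≤ 0 := by rwa [real_inner_comm]
  let δ := det2 (g - v) (h - v)
  have hδ : 0 < δ * δ :=
    mul_self_pos.2 (left_ne_zero_of_mul (det2_mul_det2_pos_of_inner_pos hv hgb hhb).ne')
  have hgw : δ * det2 (g - v) (w - v) ≤ 0 := by
    refine mul_det2_nonpos_of_mem_convexHull hg ?_ ?_ <;> rw [← det2_swap_mul_det2_swap]
    · exact det2_mul_det2_pos_of_inner_pos hv' hhb hgb
    · exact det2_mul_det2_pos_of_inner_pos hv' hhd hgd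
  have hwh : -δ * det2 (h - v) (w - v) ≤ 0 := by
    refine mul_det2_nonpos_of_mem_convexHull hh ?_ ?_ <;> rw [neg_mul_comm, ← det2_swap]
    · exact det2_mul_det2_pos_of_inner_pos hv hgb hhb
    · exact det2_mul_det2_pos_of_inner_pos hv hgd hhd
  have hvT : v ∈ convexHull ℝ {w, g, h} := by
    refine mem_convexHull_triple_of_det2 hδ ?_ ?_
    · linarith
    · rw [det2_swap]
      linarith
  have hsub : convexHull ℝ {w, g, h} ⊆ convexHull ℝ {w, b, d} := by
    refine convexHull_min ?_ (convex_convexHull ℝ _)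
    rintro q (rfl | rfl | rfl)
    exacts [subset_convexHull ℝ _ (Set.mem_insert _ _), hg, hh]
  have hvbd : ⟪b - v, d - v⟫ ≤ 0 := mem_diskD.1 (convexHull_subset_diskD hw (hsub hvT))
  exact hvbd.not_gt (inner_pos_of_inner_nonpos hv hgb hhb hgd hhd)

end Disk

section GabrielEdge

variable {W : Set Pt} {a b d g h w : Pt}

theorem gabrielEdge_iff : gabrielEdge W a b ↔ ∀ w ∈ W, w ≠ a → w ≠ b → w ∉ diskD a b := by
  simp only [gabrielEdge, Set.eq_empty_iff_forall_notMem, Set.mem_inter_iff, Set.mem_sdiff,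
    Set.mem_insert_iff, Set.mem_singleton_iff]
  grind

theorem gabrielEdge.inner_pos (hab : gabrielEdge W a b) (hw : w ∈ W) (hwa : w ≠ a) (hwb : w ≠ b) :
    0 < ⟪a - w, b - w⟫ := by
  simpa [mem_diskD] using gabrielEdge_iff.1 hab w hw hwa hwb

theorem gabrielEdge.inner_nonneg (hab : gabrielEdge W a b) (hw : w ∈ W) :
    0 ≤ ⟪a - w, b - w⟫ := by
  rcases eq_or_ne w a with rfl | hwa
  · simp
  rcases eq_or_ne w b with rfl | hwb
  · simp
  exact (hab.inner_pos hw hwa hwb).le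

theorem gabrielEdge_of_sameSide_witness (hw : w ∈ W) (hwb : w ≠ b) (hwd : w ≠ d)
    (hwbd : w ∈ diskD b d)
    (hg : 0 < det2 (d - b) (w - b) * det2 (d - b) (g - b))
    (hh : 0 < det2 (d - b) (w - b) * det2 (d - b) (h - b)) (hgb : gabrielEdge W g b)
    (hgd : gabrielEdge W g d) (hhb : gabrielEdge W h b) (hhd : gabrielEdge W h d) :
    gabrielEdge W g h := by
  have mem_triangle {x : Pt} (hx : 0 < det2 (d - b) (w - b) * det2 (d - b) (x - b))
      (hxb : gabrielEdge W x b) (hxd : gabrielEdge W x d) : x ∈ convexHull ℝ {w, b, d} := by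
    refine mem_convexHull_of_inner_nonneg (mem_diskD.1 hwbd) hx ?_ ?_ <;> rw [real_inner_comm]
    exacts [hxb.inner_nonneg hw, hxd.inner_nonneg hw]
  have hgT := mem_triangle hg hgb hgd
  have hhT := mem_triangle hh hhb hhd
  refine gabrielEdge_iff.2 fun v hv hvg hvh ↦ ?_
  rcases eq_or_ne v b with rfl | hvb
  · rw [Set.insert_comm] at hgT hhT
    exact notMem_diskD_of_mem_convexHull hwbd hwb hgT hhT hvg.symm hvh.symm
  rcases eq_or_ne v d with rfl | hvd
  · rw [Set.pair_comm, Set.insert_comm] at hgT hhT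
    rw [diskD_comm] at hwbd
    exact notMem_diskD_of_mem_convexHull hwbd hwd hgT hhT hvg.symm hvh.symm
  exact notMem_diskD_of_inner_pos hwbd hgT hhT (hgb.inner_pos hv hvg hvb)
    (hhb.inner_pos hv hvh hvb) (hgd.inner_pos hv hvg hvd) (hhd.inner_pos hv hvh hvd)

end GabrielEdge

theorem no_separating_line_through_monochromatic_pair_general
    {ι : Type*} {P W : Set Pt} {c : Pt → ι}
    (hcol : ∀ a ∈ P, ∀ b ∈ P, ∀ w ∈ W, a ≠ b → a ≠ w → b ≠ w → ¬ Collinear ℝ ({a, b, w} : Set Pt))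
    (hdraw : ∀ a ∈ P, ∀ b ∈ P, a ≠ b → (gabrielEdge W a b ↔ c a ≠ c b)) :
    ¬ ∃ b₁ ∈ P, ∃ b₂ ∈ P, ∃ m₁ ∈ P, ∃ m₂ ∈ P, ∃ g₁ ∈ P, ∃ g₂ ∈ P,
        b₁ ≠ b₂ ∧ c b₁ = c b₂ ∧
        m₁ ≠ m₂ ∧ c m₁ = c m₂ ∧ c m₁ ≠ c b₁ ∧
        g₁ ≠ g₂ ∧ c g₁ = c g₂ ∧ c g₁ ≠ c b₁ ∧
        0 < det2 (b₂ - b₁) (m₁ - b₁) ∧ 0 < det2 (b₂ - b₁) (m₂ - b₁) ∧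
        det2 (b₂ - b₁) (g₁ - b₁) < 0 ∧ det2 (b₂ - b₁) (g₂ - b₁) < 0 := by
  rintro ⟨b₁, hb₁, b₂, hb₂, m₁, hm₁, m₂, hm₂, g₁, hg₁, g₂, hg₂, hb, hcb, hm, hcm, hcmb, hg, hcg,
    hcgb, hm₁pos, hm₂pos, hg₁neg, hg₂neg⟩
  have edge {x y : Pt} (hx : x ∈ P) (hy : y ∈ P) (hc : c x ≠ c y) : gabrielEdge W x y :=
    (hdraw x hx y hy (ne_of_apply_ne c hc)).2 hc
  obtain ⟨w, hw, hwb₁, hwb₂, hwD⟩ : ∃ w ∈ W, w ≠ b₁ ∧ w ≠ b₂ ∧ w ∈ diskD b₁ b₂ := by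
    have hnot : ¬ gabrielEdge W b₁ b₂ := fun h ↦ (hdraw b₁ hb₁ b₂ hb₂ hb).1 h hcb
    simpa [gabrielEdge_iff] using hnot
  have no_pair {x y : Pt} (hx : x ∈ P) (hy : y ∈ P) (hxy : x ≠ y) (hc : c x = c y)
      (hcb₁ : c x ≠ c b₁) (hxw : 0 < det2 (b₂ - b₁) (w - b₁) * det2 (b₂ - b₁) (x - b₁))
      (hyw : 0 < det2 (b₂ - b₁) (w - b₁) * det2 (b₂ - b₁) (y - b₁)) : False :=
    (hdraw x hx y hy hxy).1 (gabrielEdge_of_sameSide_witness hw hwb₁ hwb₂ hwD hxw hyw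
      (edge hx hb₁ hcb₁) (edge hx hb₂ (hcb ▸ hcb₁)) (edge hy hb₁ (hc ▸ hcb₁))
      (edge hy hb₂ (hc ▸ hcb ▸ hcb₁))) hc
  rcases lt_trichotomy (det2 (b₂ - b₁) (w - b₁)) 0 with hneg | hzero | hpos
  · exact no_pair hg₁ hg₂ hg hcg hcgb (mul_pos_of_neg_of_neg hneg hg₁neg)
      (mul_pos_of_neg_of_neg hneg hg₂neg)
  · exact hcol b₁ hb₁ b₂ hb₂ w hw hb hwb₁.symm hwb₂.symm (collinear_of_det2_eq_zero hzero)
  · exact no_pair hm₁ hm₂ hm hcm hcmb (mul_pos hpos hm₁pos) (mul_pos hpos hm₂pos)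

/-- In a witness Gabriel drawing of a complete `k`-partite graph, no line
through two same-colored vertices can strictly separate two same-colored vertices (of a
second color) from two same-colored vertices (of a third color). -/
theorem no_separating_line_through_monochromatic_pair
    {k : ℕ} (P W : Finset Pt) (c : Pt → Fin k)
    (hgp : GenPos ((P : Set Pt) ∪ (W : Set Pt)))
    (hdraw : ∀ a ∈ P, ∀ b ∈ P, a ≠ b →
      (gabrielEdge (W : Set Pt) a b ↔ c a ≠ c b)) :
    ¬ ∃ b₁ ∈ P, ∃ b₂ ∈ P, ∃ m₁ ∈ P, ∃ m₂ ∈ P, ∃ g₁ ∈ P, ∃ g₂ ∈ P,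
        b₁ ≠ b₂ ∧ c b₁ = c b₂ ∧
        m₁ ≠ m₂ ∧ c m₁ = c m₂ ∧ c m₁ ≠ c b₁ ∧
        g₁ ≠ g₂ ∧ c g₁ = c g₂ ∧ c g₁ ≠ c b₁ ∧
        m₁ ≠ g₁ ∧ m₁ ≠ g₂ ∧ m₂ ≠ g₁ ∧ m₂ ≠ g₂ ∧
        0 < det2 (b₂ - b₁) (m₁ - b₁) ∧ 0 < det2 (b₂ - b₁) (m₂ - b₁) ∧
        det2 (b₂ - b₁) (g₁ - b₁) < 0 ∧ det2 (b₂ - b₁) (g₂ - b₁) < 0 := by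
  rintro ⟨b₁, hb₁, b₂, hb₂, m₁, hm₁, m₂, hm₂, g₁, hg₁, g₂, hg₂, hb, hcb, hm, hcm, hcmb, hg, hcg,
    hcgb, -, -, -, -, hsides⟩
  exact no_separating_line_through_monochromatic_pair_general
    (fun x hx y hy w hw ↦ hgp.1 x (.inl hx) y (.inl hy) w (.inr hw)) hdraw
    ⟨b₁, hb₁, b₂, hb₂, m₁, hm₁, m₂, hm₂, g₁, hg₁, g₂, hg₂, hb, hcb, hm, hcm, hcmb, hg, hcg, hcgb,
      hsides⟩
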